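/- arXiv:1811.08647 — 3 statements merged into one kernel-verified Lean document; each statement's English description precedes it below -/
import Mathlib

section
/- For every μ > 0, λ ≥ 0, ξ ∈ ℝ and x ∈ ℝ, ∫_ℝ e^{-μ cosh y} e^{-λ cosh(x+y)} e^{i ξ sinh(x+y)} dy = ∫_0^∞ (1/v) exp(-1/(2v)) exp(-(μ² + λ² + ξ²) v / 2) e^{-μ λ v cosh x} e^{i μ ξ v sinh x} dv. -/
open MeasureTheory Real Set

/-!
For `Re p, Re q > 0` put `B(p, q) = ∫ exp (-(p eʸ + q e⁻ʸ) / 2) dy`. When `q > 0` is real,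
translating `y` by `log q` gives `B(p, q) = B(pq, 1)`. With `p` fixed, both sides are holomorphic in
`q` on the convex set `{Re q > 0, Re (pq) > 0}`, so the equality persists there by the identity
theorem. The left-hand side of the theorem is `B(p, q)` with `p = μ + (λ - iξ) eˣ` and
`q = μ + (λ + iξ) e⁻ˣ`, whose product is `μ² + λ² + ξ² + 2μλ cosh x - 2iμξ sinh x`, and the
substitution `v = eʸ` in `B(pq, 1)` gives the right-hand side.
-/

open scoped Topology

theorem eqOn_of_eventually_eq_ofReal {E : Type*} [NormedAddCommGroup E] [NormedSpace ℂ E]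
    {f g : ℂ → E} {U : Set ℂ} (hf : AnalyticOnNhd ℂ f U) (hg : AnalyticOnNhd ℂ g U)
    (hU : IsPreconnected U) {t₀ : ℝ} (ht₀ : (t₀ : ℂ) ∈ U)
    (hfg : ∀ᶠ t : ℝ in 𝓝 t₀, f t = g t) : EqOn f g U := by
  have htendsto : Filter.Tendsto ((↑) : ℝ → ℂ) (𝓝[≠] t₀) (𝓝[≠] (t₀ : ℂ)) :=
    Complex.continuous_ofReal.continuousWithinAt.tendsto_nhdsWithin fun t ht ↦ by simpa using ht
  exact hf.eqOn_of_preconnected_of_frequently_eq hg hU ht₀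
    (htendsto.frequently (hfg.filter_mono nhdsWithin_le_nhds).frequently)

theorem differentiableAt_integral_cexp_neg_mul_smul {α E : Type*} [MeasurableSpace α]
    {ν : Measure α} [NormedAddCommGroup E] [NormedSpace ℂ E] {f : α → E} {X : α → ℝ}
    (hf : Integrable f ν) (hX : AEMeasurable X ν) (hX₀ : 0 ≤ᵐ[ν] X) {z : ℂ} (hz : 0 < z.re) :
    DifferentiableAt ℂ (fun w ↦ ∫ a, Complex.exp (-(w * X a)) • f a ∂ν) z := by
  obtain ⟨ε, hε, hεz⟩ := exists_between hz
  have hmeas (w : ℂ) : AEStronglyMeasurable (fun a ↦ Complex.exp (-(w * X a)) • f a) ν :=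
    .smul (by fun_prop) hf.aestronglyMeasurable
  have hnorm (w : ℂ) (a : α) : ‖Complex.exp (-(w * X a))‖ = rexp (-(w.re * X a)) := by
    simp [Complex.norm_exp]
  have hintegrable : Integrable (fun a ↦ Complex.exp (-(z * X a)) • f a) ν := by
    refine hf.mono (hmeas z) (hX₀.mono fun a (ha : 0 ≤ X a) ↦ ?_)
    rw [norm_smul, hnorm]
    exact mul_le_of_le_one_left (norm_nonneg _) (exp_le_one_iff.2 (by nlinarith))
  have hbound : ∀ᵐ a ∂ν, ∀ w ∈ {w : ℂ | ε < w.re},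
      ‖-(X a : ℂ) • Complex.exp (-(w * X a)) • f a‖ ≤ rexp (-1) / ε * ‖f a‖ := by
    filter_upwards [hX₀] with a (ha : 0 ≤ X a) w (hw : ε < w.re)
    rw [norm_smul, norm_smul, hnorm, norm_neg, Complex.norm_of_nonneg ha, ← mul_assoc]
    gcongr
    rw [le_div_iff₀' hε]
    calc ε * (X a * rexp (-(w.re * X a))) ≤ ε * (X a * rexp (-(ε * X a))) := by gcongr
      _ = ε * X a * rexp (-(ε * X a)) := by ring
      _ ≤ rexp (-1) := mul_exp_neg_le_exp_neg_one _
  have hderiv (a : α) (w : ℂ) : HasDerivAt (fun w ↦ Complex.exp (-(w * X a)) • f a)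
      (-(X a : ℂ) • Complex.exp (-(w * X a)) • f a) w := by
    simpa [smul_smul, mul_comm] using
      ((hasDerivAt_id w).mul_const (X a : ℂ)).neg.cexp.smul_const (f a)
  exact (hasDerivAt_integral_of_dominated_loc_of_deriv_le
    ((isOpen_lt continuous_const Complex.continuous_re).mem_nhds hεz)
    (.of_forall hmeas) hintegrable (.smul (by fun_prop) (hmeas z)) hbound (hf.norm.const_mul _)
    (.of_forall fun a w _ ↦ hderiv a w)).2.differentiableAt

theorem integral_comp_exp {E : Type*} [NormedAddCommGroup E] [NormedSpace ℝ E] (g : ℝ → E) :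
    ∫ y, g (rexp y) = ∫ v in Ioi 0, v⁻¹ • g v := by
  rw [← range_exp, ← image_univ, integral_image_eq_integral_abs_deriv_smul .univ
    (fun y _ ↦ (hasDerivAt_exp y).hasDerivWithinAt) exp_injective.injOn, setIntegral_univ]
  simp [smul_smul]

theorem one_add_sq_div_two_le_cosh (y : ℝ) : 1 + y ^ 2 / 2 ≤ cosh y := by
  have hcosh : cosh y = 1 + 2 * sinh (y / 2) ^ 2 := by
    rw [← mul_div_cancel₀ y two_ne_zero, cosh_two_mul, cosh_sq, mul_div_cancel₀ y two_ne_zero]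
    ring
  have hsinh : (y / 2) ^ 2 ≤ sinh (y / 2) ^ 2 := by
    rw [sq_le_sq, abs_sinh]
    exact self_le_sinh_iff.2 (abs_nonneg _)
  linarith

/-- The Bessel-type integral `∫ exp (-(p eʸ + q e⁻ʸ) / 2) dy`, which equals `2 K₀(√(pq))` with `K₀`
the Macdonald function. It is used for `Re p, Re q > 0`, where it converges absolutely; keeping both
parameters makes it holomorphic in each of them. -/
noncomputable def besselIntegral (p q : ℂ) : ℂ :=
  ∫ y : ℝ, Complex.exp (-(p * rexp y + q * rexp (-y)) / 2)

namespace besselIntegral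

theorem integrable {p q : ℂ} (hp : 0 < p.re) (hq : 0 < q.re) :
    Integrable fun y : ℝ ↦ Complex.exp (-(p * rexp y + q * rexp (-y)) / 2) := by
  set m := min p.re q.re
  have hm : 0 < m := lt_min hp hq
  refine (integrable_exp_neg_mul_sq (half_pos hm)).mono' (by fun_prop) (.of_forall fun y ↦ ?_)
  have hle : m * (y ^ 2 / 2) ≤ (p.re * rexp y + q.re * rexp (-y)) / 2 :=
    calc m * (y ^ 2 / 2) ≤ m * cosh y := by gcongr; linarith [one_add_sq_div_two_le_cosh y]
      _ = (m * rexp y + m * rexp (-y)) / 2 := by rw [cosh_eq]; ring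
      _ ≤ _ := by gcongr; exacts [min_le_left _ _, min_le_right _ _]
  have hre : (-(p * rexp y + q * rexp (-y)) / 2 : ℂ).re =
      -((p.re * rexp y + q.re * rexp (-y)) / 2) := by
    rw [Complex.div_ofNat_re, Complex.neg_re, Complex.add_re, Complex.re_mul_ofReal,
      Complex.re_mul_ofReal, neg_div]
  rw [Complex.norm_exp, hre, exp_le_exp]
  linarith

theorem comm (p q : ℂ) : besselIntegral p q = besselIntegral q p := by
  simpa only [neg_neg, add_comm, besselIntegral] using (integral_neg_eq_self
    (fun y : ℝ ↦ Complex.exp (-(p * rexp y + q * rexp (-y)) / 2)) volume).symm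

theorem differentiableAt_left {p q : ℂ} (hp : 0 < p.re) (hq : 0 < q.re) :
    DifferentiableAt ℂ (besselIntegral · q) p := by
  have hp₂ : 0 < (p / 2).re := by simpa using hp
  have hlaplace := differentiableAt_integral_cexp_neg_mul_smul (integrable hp₂ hq)
    (X := fun y ↦ rexp y / 2) (by fun_prop) (.of_forall fun _ ↦ by positivity)
    (z := p - p / 2) (by rwa [sub_half])
  have hfactor (w : ℂ) : besselIntegral w q =
      ∫ y : ℝ, Complex.exp (-((w - p / 2) * (rexp y / 2 : ℝ))) •
        Complex.exp (-(p / 2 * rexp y + q * rexp (-y)) / 2) := by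
    refine integral_congr_ae (.of_forall fun y ↦ ?_)
    simp only [smul_eq_mul, ← Complex.exp_add, Complex.ofReal_div, Complex.ofReal_ofNat]
    ring_nf
  simp_rw [hfactor]
  exact differentiableAt_comp_sub_const.2 hlaplace

theorem differentiableAt_right {p q : ℂ} (hp : 0 < p.re) (hq : 0 < q.re) :
    DifferentiableAt ℂ (besselIntegral p) q := by
  simpa only [comm _ p] using differentiableAt_left hq hp

theorem eq_mul_one_of_pos (p : ℂ) {q : ℝ} (hq : 0 < q) :
    besselIntegral p q = besselIntegral (p * q) 1 := by
  rw [besselIntegral, ← integral_add_right_eq_self _ (log q)]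
  simp only [neg_add, exp_add, exp_neg (log q), exp_log hq, Complex.ofReal_mul, besselIntegral]
  have hq' : (q : ℂ) ≠ 0 := mod_cast hq.ne'
  congr! 4
  push_cast
  field_simp

theorem eq_mul_one {p q : ℂ} (hp : 0 < p.re) (hq : 0 < q.re) (hpq : 0 < (p * q).re) :
    besselIntegral p q = besselIntegral (p * q) 1 := by
  set U : Set ℂ := {w | 0 < w.re} ∩ {w | 0 < (p * w).re}
  have hU_open : IsOpen U :=
    (isOpen_lt continuous_const (by fun_prop)).inter (isOpen_lt continuous_const (by fun_prop))
  have hU_convex : Convex ℝ U := by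
    have hhalf : Convex ℝ {w : ℂ | 0 < w.re} := convex_halfSpace_re_gt 0
    exact hhalf.inter (hhalf.linear_preimage (LinearMap.mulLeft ℝ p))
  have hleft : DifferentiableOn ℂ (besselIntegral p) U := fun w hw ↦
    (differentiableAt_right hp hw.1).differentiableWithinAt
  have hright : DifferentiableOn ℂ (fun w ↦ besselIntegral (p * w) 1) U := fun w hw ↦
    ((differentiableAt_left hw.2 (by simp)).comp w
      (differentiableAt_id.const_mul p)).differentiableWithinAt
  exact eqOn_of_eventually_eq_ofReal (hleft.analyticOnNhd hU_open) (hright.analyticOnNhd hU_open)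
    hU_convex.isPreconnected (t₀ := 1) ⟨by simp, by simpa using hp⟩
    ((lt_mem_nhds one_pos).mono fun t ht ↦ eq_mul_one_of_pos p ht) ⟨hq, hpq⟩

theorem eq_integral_Ioi (p q : ℂ) :
    besselIntegral p q = ∫ v in Ioi (0 : ℝ), 1 / (v : ℂ) * Complex.exp (-(p * v + q / v) / 2) := by
  simp_rw [besselIntegral, exp_neg]
  rw [integral_comp_exp fun v ↦ Complex.exp (-(p * v + q * (v⁻¹ : ℝ)) / 2)]
  simp [div_eq_mul_inv]

end besselIntegral

theorem integral_cexp_cosh_sinh_eq_besselIntegral (μ lam ξ x : ℂ) :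
    ∫ y : ℝ, Complex.exp (-(μ * Complex.cosh y)) * Complex.exp (-(lam * Complex.cosh (x + y))) *
        Complex.exp (Complex.I * (ξ * Complex.sinh (x + y))) =
      besselIntegral (μ + (lam - Complex.I * ξ) * Complex.exp x)
        (μ + (lam + Complex.I * ξ) * Complex.exp (-x)) := by
  refine integral_congr_ae (.of_forall fun y ↦ ?_)
  simp only [← Complex.exp_add, Complex.cosh, Complex.sinh, neg_add, Complex.ofReal_exp,
    Complex.ofReal_neg]
  congr 1
  simp only [Complex.exp_add]
  ring

theorem stmt_1_general {μ lam ξ x : ℂ}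
    (hp : 0 < (μ + (lam - Complex.I * ξ) * Complex.exp x).re)
    (hq : 0 < (μ + (lam + Complex.I * ξ) * Complex.exp (-x)).re)
    (hpq : 0 < (μ ^ 2 + lam ^ 2 + ξ ^ 2 + 2 * (μ * lam * Complex.cosh x)
      - 2 * (Complex.I * (μ * ξ * Complex.sinh x))).re) :
    ∫ y : ℝ, Complex.exp (-(μ * Complex.cosh y)) * Complex.exp (-(lam * Complex.cosh (x + y))) *
        Complex.exp (Complex.I * (ξ * Complex.sinh (x + y))) =
      ∫ v in Ioi (0 : ℝ), 1 / (v : ℂ) * Complex.exp (-(1 / (2 * v))) *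
        Complex.exp (-((μ ^ 2 + lam ^ 2 + ξ ^ 2) * v / 2)) *
        Complex.exp (-(μ * lam * v * Complex.cosh x)) *
        Complex.exp (Complex.I * (μ * ξ * v * Complex.sinh x)) := by
  have hmul : (μ + (lam - Complex.I * ξ) * Complex.exp x) *
      (μ + (lam + Complex.I * ξ) * Complex.exp (-x)) = μ ^ 2 + lam ^ 2 + ξ ^ 2 +
        2 * (μ * lam * Complex.cosh x) - 2 * (Complex.I * (μ * ξ * Complex.sinh x)) := by
    have hexp : Complex.exp x * Complex.exp (-x) = 1 := by rw [← Complex.exp_add]; simp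
    rw [Complex.cosh, Complex.sinh]
    linear_combination (lam ^ 2 + ξ ^ 2) * hexp -
      ξ ^ 2 * Complex.exp x * Complex.exp (-x) * Complex.I_sq
  rw [integral_cexp_cosh_sinh_eq_besselIntegral, besselIntegral.eq_mul_one hp hq (hmul ▸ hpq), hmul,
    besselIntegral.eq_integral_Ioi]
  refine integral_congr_ae (.of_forall fun v ↦ ?_)
  simp only [mul_assoc, ← Complex.exp_add]
  ring_nf

theorem stmt_1 (μ lam ξ x : ℝ) (hμ : 0 < μ) (hlam : 0 ≤ lam) :
    ∫ y : ℝ,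
        Complex.exp (-((μ * Real.cosh y : ℝ) : ℂ)) *
          Complex.exp (-((lam * Real.cosh (x + y) : ℝ) : ℂ)) *
          Complex.exp (Complex.I * ((ξ * Real.sinh (x + y) : ℝ) : ℂ))
      = ∫ v in Ioi (0:ℝ),
          (1 / (v : ℂ)) * Complex.exp (-((1 / (2 * v) : ℝ) : ℂ)) *
            Complex.exp (-(((μ ^ 2 + lam ^ 2 + ξ ^ 2) * v / 2 : ℝ) : ℂ)) *
            Complex.exp (-((μ * lam * v * Real.cosh x : ℝ) : ℂ)) *
            Complex.exp (Complex.I * ((μ * ξ * v * Real.sinh x : ℝ) : ℂ)) := by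
  have hp : 0 < μ + lam * rexp x := by positivity
  have hq : 0 < μ + lam * rexp (-x) := by positivity
  have hpq : 0 < μ ^ 2 + lam ^ 2 + ξ ^ 2 + 2 * (μ * lam * cosh x) := by positivity
  push_cast
  refine stmt_1_general ?_ ?_ ?_
  · simpa [Complex.exp_re] using hp
  · simpa [Complex.exp_re, Complex.exp_im] using hq
  · norm_cast
    simpa [-Complex.ofReal_pow] using hpq
end

section
/- For every ξ ∈ ℝ with ξ ≠ 0 and every b ∈ ℝ with b ≠ 0, ∫_ℝ cos(ξ x) / (cosh b + cosh x) dx = 2π sin(ξ b) / (sinh(π ξ) sinh b). -/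
open MeasureTheory Real Set

/-!
Write `σ` for the logistic sigmoid. Since `sinh b / (cosh b + cosh x) = σ (x + b) - σ (x - b)`,
integrating by parts and translating reduces the integral of `exp (s x) / (cosh b + cosh x)` to that
of `exp (s x) σ' x`. The substitution `t = σ x` turns the latter into the Beta integral
`B (1 + s, 1 - s) = Γ (1 + s) Γ (1 - s) = π s / sin (π s)`, and the cosine is the average of the
exponentials with `s = ± i ξ`.
-/

section ChangeOfVariables

variable {E : Type*} [NormedAddCommGroup E] [NormedSpace ℝ E]

lemma integrable_deriv_sigmoid_smul_comp_iff (g : ℝ → E) :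
    Integrable (fun x ↦ deriv sigmoid x • g (sigmoid x)) ↔ IntegrableOn g (Ioo 0 1) := by
  rw [← range_sigmoid, ← image_univ, ← integrableOn_univ]
  exact (integrableOn_image_iff_integrableOn_deriv_smul_of_monotoneOn MeasurableSet.univ
    (fun _ _ ↦ differentiableAt_sigmoid.hasDerivAt.hasDerivWithinAt)
    (sigmoid_monotone.monotoneOn _) g).symm

lemma integral_deriv_sigmoid_smul_comp (g : ℝ → E) :
    ∫ x, deriv sigmoid x • g (sigmoid x) = ∫ t in Ioo 0 1, g t := by
  rw [← range_sigmoid, ← image_univ, ← setIntegral_univ]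
  exact (integral_image_eq_integral_deriv_smul_of_monotoneOn MeasurableSet.univ
    (fun _ _ ↦ differentiableAt_sigmoid.hasDerivAt.hasDerivWithinAt)
    (sigmoid_monotone.monotoneOn _) g).symm

end ChangeOfVariables

section ExponentialIntegrals

variable {s : ℂ}

lemma hasDerivAt_cexp_const_mul_ofReal (s : ℂ) (x : ℝ) :
    HasDerivAt (fun y : ℝ ↦ Complex.exp (s * y)) (s * Complex.exp (s * x)) x := by
  simpa [mul_comm] using ((Complex.ofRealCLM.hasDerivAt (x := x)).const_mul s).cexp

lemma integral_cexp_mul_comp_add_right (s : ℂ) (f : ℝ → ℂ) (c : ℝ) :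
    ∫ x : ℝ, Complex.exp (s * x) * f (x + c)
      = Complex.exp (-(s * c)) * ∫ x : ℝ, Complex.exp (s * x) * f x := by
  rw [← integral_const_mul, ← integral_add_right_eq_self
    (fun x : ℝ ↦ Complex.exp (-(s * c)) * (Complex.exp (s * x) * f x)) c]
  refine integral_congr_ae (.of_forall fun x ↦ ?_)
  simp only [← mul_assoc, ← Complex.exp_add]
  push_cast
  ring_nf

lemma integrable_cexp_mul_comp_add_right {f : ℝ → ℂ}
    (hf : Integrable fun x : ℝ ↦ Complex.exp (s * x) * f x) (c : ℝ) :
    Integrable fun x : ℝ ↦ Complex.exp (s * x) * f (x + c) := by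
  refine ((hf.comp_add_right c).const_mul (Complex.exp (-(s * c)))).congr (.of_forall fun x ↦ ?_)
  simp only [← mul_assoc, ← Complex.exp_add]
  push_cast
  ring_nf

lemma integral_cexp_mul_deriv {f f' : ℝ → ℂ} (hf : ∀ x, HasDerivAt f (f' x) x)
    (hint : Integrable fun x : ℝ ↦ Complex.exp (s * x) * f x)
    (hint' : Integrable fun x : ℝ ↦ Complex.exp (s * x) * f' x) :
    ∫ x : ℝ, Complex.exp (s * x) * f' x = -s * ∫ x : ℝ, Complex.exp (s * x) * f x := by
  have hint_mul : Integrable fun x : ℝ ↦ s * Complex.exp (s * x) * f x := by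
    simpa only [mul_assoc] using hint.const_mul s
  rw [integral_mul_deriv_eq_deriv_mul_of_integrable
    (fun x _ ↦ hasDerivAt_cexp_const_mul_ofReal s x) (fun x _ ↦ hf x) hint' hint_mul hint]
  simp only [mul_assoc, integral_const_mul, neg_mul]

lemma integral_cexp_mul_add_sub_sub (hs₀ : s ≠ 0) {f f' : ℝ → ℂ}
    (hf : ∀ x, HasDerivAt f (f' x) x) (b : ℝ)
    (hint : Integrable fun x : ℝ ↦ Complex.exp (s * x) * (f (x + b) - f (x - b)))
    (hint' : Integrable fun x : ℝ ↦ Complex.exp (s * x) * f' x) :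
    ∫ x : ℝ, Complex.exp (s * x) * (f (x + b) - f (x - b))
      = 2 * Complex.sinh (s * b) / s * ∫ x : ℝ, Complex.exp (s * x) * f' x := by
  have hderiv (x : ℝ) :
      HasDerivAt (fun y ↦ f (y + b) - f (y - b)) (f' (x + b) - f' (x + -b)) x := by
    simpa only [sub_eq_add_neg] using
      ((hf (x + b)).comp_add_const x b).fun_sub ((hf (x + -b)).comp_add_const x (-b))
  have hint_add := integrable_cexp_mul_comp_add_right hint' b
  have hint_sub := integrable_cexp_mul_comp_add_right hint' (-b)
  have by_parts := integral_cexp_mul_deriv hderiv hint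
    (by simpa only [mul_sub] using! hint_add.sub hint_sub)
  have integral_translates : ∫ x : ℝ, Complex.exp (s * x) * (f' (x + b) - f' (x + -b))
      = -(2 * Complex.sinh (s * b)) * ∫ x : ℝ, Complex.exp (s * x) * f' x := by
    simp only [mul_sub]
    rw [integral_sub hint_add hint_sub, integral_cexp_mul_comp_add_right,
      integral_cexp_mul_comp_add_right, Complex.two_sinh, Complex.ofReal_neg, mul_neg, neg_neg]
    ring
  rw [div_mul_eq_mul_div, eq_div_iff hs₀]
  linear_combination by_parts - integral_translates

end ExponentialIntegrals

section Sigmoid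

variable {s : ℂ}

lemma sigmoid_cpow_mul_one_sub_sigmoid_cpow_neg (s : ℂ) (x : ℝ) :
    (sigmoid x : ℂ) ^ s * (1 - sigmoid x : ℂ) ^ (-s) = Complex.exp (s * x) := by
  have hpos := sigmoid_pos x
  have hpos' : 0 < sigmoid x * Real.exp (-x) := by positivity
  have one_sub_eq : (1 - sigmoid x : ℂ) = (sigmoid x * Real.exp (-x) : ℝ) := by
    rw [sigmoid_mul_rexp_neg, sigmoid_neg]
    push_cast
    rfl
  rw [one_sub_eq, Complex.cpow_def_of_ne_zero (by exact_mod_cast hpos.ne'),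
    Complex.cpow_def_of_ne_zero (by exact_mod_cast hpos'.ne'), ← Complex.exp_add,
    ← Complex.ofReal_log hpos.le, ← Complex.ofReal_log hpos'.le,
    Real.log_mul hpos.ne' (Real.exp_pos _).ne', Real.log_exp]
  push_cast
  ring_nf

lemma deriv_sigmoid_smul_cpow_mul_cpow (s : ℂ) (x : ℝ) :
    deriv sigmoid x • ((sigmoid x : ℂ) ^ (1 + s - 1) * (1 - sigmoid x : ℂ) ^ (1 - s - 1))
      = Complex.exp (s * x) * deriv sigmoid x := by
  rw [add_sub_cancel_left, sub_sub_cancel_left, sigmoid_cpow_mul_one_sub_sigmoid_cpow_neg,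
    Complex.real_smul, mul_comm]

lemma integrable_cexp_mul_deriv_sigmoid (hs : |s.re| < 1) :
    Integrable fun x : ℝ ↦ Complex.exp (s * x) * deriv sigmoid x := by
  obtain ⟨hlo, hhi⟩ := abs_lt.1 hs
  have hbeta := Complex.betaIntegral_convergent (u := 1 + s) (v := 1 - s)
    (by rw [Complex.add_re, Complex.one_re]; linarith)
    (by rw [Complex.sub_re, Complex.one_re]; linarith)
  rw [intervalIntegrable_iff_integrableOn_Ioo_of_le zero_le_one,
    ← integrable_deriv_sigmoid_smul_comp_iff] at hbeta
  simpa only [deriv_sigmoid_smul_cpow_mul_cpow] using hbeta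

lemma integral_cexp_mul_deriv_sigmoid_eq_betaIntegral (s : ℂ) :
    ∫ x : ℝ, Complex.exp (s * x) * deriv sigmoid x = Complex.betaIntegral (1 + s) (1 - s) := by
  rw [Complex.betaIntegral, intervalIntegral.integral_of_le zero_le_one,
    integral_Ioc_eq_integral_Ioo, ← integral_deriv_sigmoid_smul_comp]
  simp only [deriv_sigmoid_smul_cpow_mul_cpow]

lemma betaIntegral_one_add_one_sub (hs : |s.re| < 1) (hs₀ : s ≠ 0) :
    Complex.betaIntegral (1 + s) (1 - s) = π * s / Complex.sin (π * s) := by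
  obtain ⟨hlo, hhi⟩ := abs_lt.1 hs
  have hGamma := Complex.Gamma_mul_Gamma_eq_betaIntegral (s := 1 + s) (t := 1 - s)
    (by rw [Complex.add_re, Complex.one_re]; linarith)
    (by rw [Complex.sub_re, Complex.one_re]; linarith)
  calc Complex.betaIntegral (1 + s) (1 - s)
      = Complex.Gamma (1 + s) * Complex.Gamma (1 - s) := by
        rw [hGamma, add_add_sub_cancel, Complex.Gamma_add_one 1 one_ne_zero, Complex.Gamma_one,
          one_mul, one_mul]
    _ = s * (Complex.Gamma s * Complex.Gamma (1 - s)) := by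
        rw [add_comm 1 s, Complex.Gamma_add_one s hs₀, mul_assoc]
    _ = π * s / Complex.sin (π * s) := by
        rw [Complex.Gamma_mul_Gamma_one_sub]
        ring

lemma integral_cexp_mul_deriv_sigmoid (hs : |s.re| < 1) (hs₀ : s ≠ 0) :
    ∫ x : ℝ, Complex.exp (s * x) * deriv sigmoid x = π * s / Complex.sin (π * s) := by
  rw [integral_cexp_mul_deriv_sigmoid_eq_betaIntegral, betaIntegral_one_add_one_sub hs hs₀]

lemma deriv_sigmoid_eq_inv_two_mul_one_add_cosh (x : ℝ) :
    deriv sigmoid x = (2 * (1 + Real.cosh x))⁻¹ := by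
  simp only [deriv_sigmoid, sigmoid_def, Real.cosh_eq, Real.exp_neg]
  field_simp
  ring

lemma sigmoid_add_sub_sigmoid_sub (x b : ℝ) :
    sigmoid (x + b) - sigmoid (x - b) = Real.sinh b / (Real.cosh b + Real.cosh x) := by
  simp only [sigmoid_def, Real.sinh_eq, Real.cosh_eq, neg_add, neg_sub, sub_eq_add_neg b x,
    Real.exp_add, Real.exp_neg]
  field_simp
  ring

end Sigmoid

section CoshKernel

variable {s : ℂ}

lemma integrable_cexp_div_cosh_add_cosh (hs : |s.re| < 1) (b : ℝ) :
    Integrable fun x : ℝ ↦ Complex.exp (s * x) / (Real.cosh b + Real.cosh x : ℝ) := by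
  have cosh_add_cosh_pos (x : ℝ) : 0 < Real.cosh b + Real.cosh x := by positivity
  refine ((integrable_cexp_mul_deriv_sigmoid hs).const_mul 2).mono ?_ (.of_forall fun x ↦ ?_)
  · refine (Continuous.div (by fun_prop) (by fun_prop) fun x ↦ ?_).aestronglyMeasurable
    exact_mod_cast (cosh_add_cosh_pos x).ne'
  · have kernel_le : (Real.cosh b + Real.cosh x)⁻¹ ≤ 2 * deriv sigmoid x := by
      rw [deriv_sigmoid_eq_inv_two_mul_one_add_cosh, mul_inv, mul_inv_cancel_left₀ two_ne_zero]
      gcongr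
      exact Real.one_le_cosh b
    calc ‖Complex.exp (s * x) / (Real.cosh b + Real.cosh x : ℝ)‖
        = ‖Complex.exp (s * x)‖ * (Real.cosh b + Real.cosh x)⁻¹ := by
          rw [norm_div, Complex.norm_of_nonneg (cosh_add_cosh_pos x).le, div_eq_mul_inv]
      _ ≤ ‖Complex.exp (s * x)‖ * |2 * deriv sigmoid x| := by
          gcongr
          exact kernel_le.trans (le_abs_self _)
      _ = ‖2 * (Complex.exp (s * x) * deriv sigmoid x)‖ := by
          rw [mul_left_comm, norm_mul, ← Complex.ofReal_ofNat, ← Complex.ofReal_mul,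
            Complex.norm_real, Real.norm_eq_abs]

lemma integral_cexp_mul_sigmoid_add_sub_sigmoid_sub (hs : |s.re| < 1) (hs₀ : s ≠ 0) (b : ℝ) :
    ∫ x : ℝ, Complex.exp (s * x) * (sigmoid (x + b) - sigmoid (x - b) : ℝ)
      = 2 * π * Complex.sinh (s * b) / Complex.sin (π * s) := by
  have hint : Integrable fun x : ℝ ↦
      Complex.exp (s * x) * (sigmoid (x + b) - sigmoid (x - b) : ℝ) := by
    refine ((integrable_cexp_div_cosh_add_cosh hs b).const_mul (Real.sinh b : ℂ)).congr
      (.of_forall fun x ↦ ?_)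
    simp only [sigmoid_add_sub_sigmoid_sub, Complex.ofReal_div]
    ring
  simp only [Complex.ofReal_sub] at hint ⊢
  rw [integral_cexp_mul_add_sub_sub hs₀
      (fun x ↦ (differentiableAt_sigmoid (x := x)).hasDerivAt.ofReal_comp) b hint
      (integrable_cexp_mul_deriv_sigmoid hs),
    integral_cexp_mul_deriv_sigmoid hs hs₀]
  field_simp

lemma integral_cexp_div_cosh_add_cosh (hs : |s.re| < 1) (hs₀ : s ≠ 0) {b : ℝ} (hb : b ≠ 0) :
    ∫ x : ℝ, Complex.exp (s * x) / (Real.cosh b + Real.cosh x : ℝ)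
      = 2 * π * Complex.sinh (s * b) / (Complex.sin (π * s) * Real.sinh b) := by
  have sinh_ne_zero : (Real.sinh b : ℂ) ≠ 0 := by exact_mod_cast Real.sinh_ne_zero.2 hb
  rw [← div_div, ← integral_cexp_mul_sigmoid_add_sub_sigmoid_sub hs hs₀, eq_div_iff sinh_ne_zero,
    ← integral_mul_const]
  simp only [sigmoid_add_sub_sigmoid_sub, Complex.ofReal_div]
  refine integral_congr_ae (.of_forall fun x ↦ ?_)
  ring

end CoshKernel

theorem stmt_7_general {ξ : ℂ} (hξ_im : |ξ.im| < 1) (hξ : ξ ≠ 0) {b : ℝ} (hb : b ≠ 0) :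
    ∫ x : ℝ, Complex.cos (ξ * x) / (Real.cosh b + Real.cosh x : ℝ)
      = 2 * π * Complex.sin (ξ * b) / (Complex.sinh (π * ξ) * Real.sinh b) := by
  have hre : |(ξ * Complex.I).re| < 1 := by simpa using hξ_im
  have hre_neg : |(-(ξ * Complex.I)).re| < 1 := by simpa using hξ_im
  have hne : ξ * Complex.I ≠ 0 := mul_ne_zero hξ Complex.I_ne_zero
  have cos_eq (x : ℝ) : Complex.cos (ξ * x) / (Real.cosh b + Real.cosh x : ℝ)
      = (Complex.exp (ξ * Complex.I * x) / (Real.cosh b + Real.cosh x : ℝ)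
        + Complex.exp (-(ξ * Complex.I) * x) / (Real.cosh b + Real.cosh x : ℝ)) / 2 := by
    rw [Complex.cos]
    ring_nf
  simp only [cos_eq]
  rw [integral_div, integral_add (integrable_cexp_div_cosh_add_cosh hre b)
      (integrable_cexp_div_cosh_add_cosh hre_neg b),
    integral_cexp_div_cosh_add_cosh hre hne hb,
    integral_cexp_div_cosh_add_cosh hre_neg (neg_ne_zero.2 hne) hb, neg_mul, mul_neg,
    Complex.sinh_neg, Complex.sin_neg, mul_right_comm ξ, ← mul_assoc (π : ℂ),
    Complex.sinh_mul_I, Complex.sin_mul_I]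
  field_simp
  ring

theorem stmt_7 (ξ b : ℝ) (hξ : ξ ≠ 0) (hb : b ≠ 0) :
    ∫ x : ℝ, Real.cos (ξ * x) / (Real.cosh b + Real.cosh x)
      = 2 * π * Real.sin (ξ * b) / (Real.sinh (π * ξ) * Real.sinh b) := by
  have hcomplex := stmt_7_general (ξ := ξ) (by simp) (by exact_mod_cast hξ) hb
  exact_mod_cast hcomplex
end

section
/- Let C be a standard Cauchy random variable and ε an independent Rademacher variable (P(ε = 1) = P(ε = -1) = 1/2). Then for every a ∈ ℝ with |a| ≥ 1 and every θ ∈ [-1, 1], the random variable aC + θ√(1 + a²C²) ε has the same distribution as (a + θ√(a² − 1) ε) C. Equivalently, both have characteristic function ξ ↦ exp(−|aξ|) cosh(θ ξ √(a² − 1)). -/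
/-!
In hyperbolic coordinates `a = ± cosh β`, `√(a² - 1) = ± sinh β`, `θ = tanh α`, and for `e = ± 1`,

* `x + θ √(1 + x²) e = sinh (arsinh x + α e) / cosh α`,
* `cosh β + θ sinh β e = cosh (β + α e) / cosh α`.

By symmetry of the Cauchy law the sign of `a` can be absorbed into `C`, and for `|θ| < 1` the claim
says that `sinh (arsinh (cosh β * C) + α ε)` and `cosh (β + α ε) * C` have the same law. Both maps
are increasing in `C`, so comparing distribution functions at `sinh τ` reduces it to the identity
`arctan (sinh (τ - α) / cosh β) + arctan (sinh (τ + α) / cosh β)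
  = arctan (sinh τ / cosh (β + α)) + arctan (sinh τ / cosh (β - α))`,
in which both sides are arguments of positively proportional complex numbers. The endpoints
`θ = ± 1` follow by continuity in law.
-/

open MeasureTheory Real Set ProbabilityTheory
open scoped ENNReal

section Arctan

lemma arctan_eq_arg_one_add_mul_I (x : ℝ) : arctan x = Complex.arg (1 + x * Complex.I) := by
  refine arctan_eq_of_tan_eq (by simp [Complex.tan_arg]) (abs_lt.mp ?_)
  exact Complex.abs_arg_lt_pi_div_two_iff.mpr (Or.inl (by simp))

lemma arctan_add_arctan_eq_arg (x y : ℝ) :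
    arctan x + arctan y = Complex.arg ((1 + x * Complex.I) * (1 + y * Complex.I)) := by
  have one_add_mul_I_ne_zero (u : ℝ) : (1 + u * Complex.I) ≠ 0 := fun h => by
    simpa using congrArg Complex.re h
  have hx := arctan_mem_Ioo x
  have hy := arctan_mem_Ioo y
  have hsum : arctan x + arctan y ∈ Ioc (-π) π :=
    ⟨by linarith [hx.1, hy.1], by linarith [hx.2, hy.2]⟩
  rw [arctan_eq_arg_one_add_mul_I, arctan_eq_arg_one_add_mul_I] at hsum ⊢
  exact (Complex.arg_mul (one_add_mul_I_ne_zero x) (one_add_mul_I_ne_zero y) hsum).symm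

lemma arctan_add_arctan_eq_of_pos_mul {x y z w k : ℝ} (hk : 0 < k)
    (hre : 1 - x * y = k * (1 - z * w)) (him : x + y = k * (z + w)) :
    arctan x + arctan y = arctan z + arctan w := by
  rw [arctan_add_arctan_eq_arg, arctan_add_arctan_eq_arg z w,
    ← Complex.arg_real_mul ((1 + z * Complex.I) * (1 + w * Complex.I)) hk]
  congr 1
  apply Complex.ext
  · simpa using hre
  · simpa [add_comm] using him

lemma cosh_add_mul_cosh_sub (x y : ℝ) :
    cosh (x + y) * cosh (x - y) = cosh x ^ 2 + sinh y ^ 2 := by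
  rw [cosh_add, cosh_sub]
  linear_combination cosh x ^ 2 * cosh_sq y - sinh y ^ 2 * sinh_sq x

lemma arctan_sinh_sub_div_cosh_add_arctan_sinh_add_div_cosh (α β τ : ℝ) :
    arctan (sinh (τ - α) / cosh β) + arctan (sinh (τ + α) / cosh β)
      = arctan (sinh τ / cosh (β + α)) + arctan (sinh τ / cosh (β - α)) := by
  have hsinh : sinh (τ - α) * sinh (τ + α) = sinh τ ^ 2 - sinh α ^ 2 := by
    rw [sinh_add, sinh_sub]
    linear_combination sinh τ ^ 2 * cosh_sq α - sinh α ^ 2 * cosh_sq τ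
  apply arctan_add_arctan_eq_of_pos_mul (k := cosh (β + α) * cosh (β - α) / cosh β ^ 2)
    (by positivity)
  · field_simp
    linear_combination -hsinh - cosh_add_mul_cosh_sub β α
  · field_simp
    rw [sinh_add, sinh_sub, cosh_add, cosh_sub]
    ring

end Arctan

section Hyperbolic

@[fun_prop]
lemma measurable_arsinh : Measurable arsinh := continuous_arsinh.measurable

lemma sinh_arsinh_add_le_iff {x t α : ℝ} :
    sinh (arsinh x + α) ≤ t ↔ x ≤ sinh (arsinh t - α) := by
  rw [← arsinh_le_arsinh, arsinh_sinh, ← le_sub_iff_add_le, ← sinh_le_sinh, sinh_arsinh]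

lemma add_tanh_mul_sqrt_mul_eq (α x : ℝ) {e : ℝ} (he : e = 1 ∨ e = -1) :
    x + tanh α * √(1 + x ^ 2) * e = (cosh α)⁻¹ * sinh (arsinh x + α * e) := by
  rcases he with rfl | rfl <;>
  · simp only [tanh_eq_sinh_div_cosh, sinh_add, sinh_arsinh, cosh_arsinh, mul_one, mul_neg,
      sinh_neg, cosh_neg]
    field_simp

lemma cosh_add_tanh_mul_sinh_mul_eq (α β : ℝ) {e : ℝ} (he : e = 1 ∨ e = -1) :
    cosh β + tanh α * sinh β * e = (cosh α)⁻¹ * cosh (β + α * e) := by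
  rcases he with rfl | rfl <;>
  · simp only [tanh_eq_sinh_div_cosh, cosh_add, mul_one, mul_neg, sinh_neg, cosh_neg]
    field_simp

lemma exists_eq_sign_mul_cosh_and_sqrt_eq_sign_mul_sinh {a : ℝ} (ha : 1 ≤ |a|) :
    ∃ σ β : ℝ, (σ = 1 ∨ σ = -1) ∧ a = σ * cosh β ∧ √(a ^ 2 - 1) = σ * sinh β := by
  rcases le_abs.mp ha with h | h
  · exact ⟨1, arcosh a, .inl rfl, by simp [cosh_arcosh h], by simp [sinh_arcosh h]⟩
  · exact ⟨-1, -arcosh (-a), .inr rfl, by simp [cosh_arcosh h], by simp [sinh_arcosh h]⟩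

end Hyperbolic

section Law

variable {Ω : Type*} [MeasurableSpace Ω] {P : Measure Ω}

lemma hasLaw_of_indepFun_of_hasLaw_add_dirac {E F G : Type*} [MeasurableSpace E]
    [MeasurableSpace F] [MeasurableSpace G] {μ : Measure E} [IsFiniteMeasure μ] {X : Ω → E}
    {Y : Ω → F} {p q : ℝ≥0∞} {s t : F} (hX : HasLaw X μ P)
    (hY : HasLaw Y (p • Measure.dirac s + q • Measure.dirac t) P) (hXY : IndepFun X Y P)
    {f : E → F → G} (hf : Measurable (Function.uncurry f)) :
    HasLaw (fun ω => f (X ω) (Y ω)) (p • μ.map (f · s) + q • μ.map (f · t)) P := by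
  have := hX.isFiniteMeasure
  refine HasLaw.fun_comp (Y := Function.uncurry f) ⟨hf.aemeasurable, ?_⟩ (hXY.hasLaw_prod hX hY)
  rw [Measure.prod_add, Measure.prod_smul_right, Measure.prod_smul_right, Measure.prod_dirac,
    Measure.prod_dirac, Measure.map_add _ _ hf, Measure.map_smul, Measure.map_smul,
    Measure.map_map hf (by fun_prop), Measure.map_map hf (by fun_prop)]
  rfl

lemma continuous_integral_map {T E : Type*} [TopologicalSpace T] [FirstCountableTopology T]
    [TopologicalSpace E] [MeasurableSpace E] [OpensMeasurableSpace E] [IsFiniteMeasure P]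
    {X : T → Ω → E} (hX : ∀ t, Measurable (X t)) (hXcont : ∀ ω, Continuous (X · ω))
    (f : BoundedContinuousFunction E ℝ) : Continuous fun t => ∫ x, f x ∂P.map (X t) := by
  have integral_eq (t : T) : ∫ x, f x ∂P.map (X t) = ∫ ω, f (X t ω) ∂P :=
    integral_map (hX t).aemeasurable f.continuous.measurable.aestronglyMeasurable
  simp only [integral_eq]
  exact continuous_of_dominated
    (fun t => (f.continuous.measurable.comp (hX t)).aestronglyMeasurable)
    (fun t => ae_of_all _ fun ω => f.norm_coe_le_norm (X t ω)) (integrable_const ‖f‖)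
    (ae_of_all _ fun ω => f.continuous.comp (hXcont ω))

lemma isClosed_setOf_map_eq_map {T E : Type*} [TopologicalSpace T] [FirstCountableTopology T]
    [TopologicalSpace E] [HasOuterApproxClosed E] [MeasurableSpace E] [BorelSpace E]
    [IsFiniteMeasure P] {X Y : T → Ω → E} (hX : ∀ t, Measurable (X t)) (hY : ∀ t, Measurable (Y t))
    (hXcont : ∀ ω, Continuous (X · ω)) (hYcont : ∀ ω, Continuous (Y · ω)) :
    IsClosed {t | P.map (X t) = P.map (Y t)} := by
  have setOf_eq_iInter : {t | P.map (X t) = P.map (Y t)} =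
      ⋂ f : BoundedContinuousFunction E ℝ,
        {t | ∫ x, f x ∂P.map (X t) = ∫ x, f x ∂P.map (Y t)} := by
    ext t
    simp only [mem_ofPred_eq, mem_iInter]
    exact ⟨fun h f => by rw [h], ext_of_forall_integral_eq_of_IsFiniteMeasure⟩
  rw [setOf_eq_iInter]
  exact isClosed_iInter fun f =>
    isClosed_eq (continuous_integral_map hX hXcont f) (continuous_integral_map hY hYcont f)

lemma map_real_Iic_eq_of_le_iff {E F : Type*} [Preorder E] [MeasurableSpace E] [Preorder F]
    [TopologicalSpace F] [ClosedIicTopology F] [MeasurableSpace F] [OpensMeasurableSpace F]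
    {μ : Measure E} {f : E → F} (hf : Measurable f) {c : E} {t : F}
    (hft : ∀ x, f x ≤ t ↔ x ≤ c) : (μ.map f).real (Iic t) = μ.real (Iic c) := by
  rw [map_measureReal_apply hf measurableSet_Iic, show f ⁻¹' Iic t = Iic c from ext hft]

end Law

section Cauchy

variable {Ω : Type*} [MeasurableSpace Ω] {P : Measure Ω} {C : Ω → ℝ}

lemma cauchyMeasure_zero_one :
    cauchyMeasure 0 1 = volume.withDensity fun x => ENNReal.ofReal (1 / (π * (1 + x ^ 2))) := by
  rw [cauchyMeasure_of_scale_ne_zero 0 one_ne_zero]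
  congr with x
  simp [cauchyPDF, cauchyPDFReal_def', mul_comm]

lemma cauchyMeasure_real_Iic (x₀ : ℝ) {γ : NNReal} (hγ : γ ≠ 0) (x : ℝ) :
    (cauchyMeasure x₀ γ).real (Iic x) = π⁻¹ * arctan ((x - x₀) / γ) + 1 / 2 := by
  have hderiv (y : ℝ) :
      HasDerivAt (fun y => π⁻¹ * arctan ((y - x₀) / γ)) (cauchyPDFReal x₀ γ y) y := by
    rw [cauchyPDFReal_def']
    convert! (((hasDerivAt_id' y).sub_const x₀).div_const (γ : ℝ)).arctan.const_mul π⁻¹ using 1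
    push_cast
    ring
  have hbot : Filter.Tendsto (fun y => π⁻¹ * arctan ((y - x₀) / γ)) Filter.atBot
      (nhds (π⁻¹ * -(π / 2))) :=
    ((tendsto_nhds_of_tendsto_nhdsWithin tendsto_arctan_atBot).comp
      ((Filter.tendsto_atBot_add_const_right _ (-x₀) Filter.tendsto_id).atBot_div_const
        (by positivity))).const_mul _
  have hint : IntegrableOn (cauchyPDFReal x₀ γ) (Iic x) :=
    (integrable_cauchyPDFReal x₀).integrableOn
  rw [cauchyMeasure_of_scale_ne_zero x₀ hγ, measureReal_def,
    withDensity_apply _ measurableSet_Iic]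
  simp only [cauchyPDF]
  rw [← integral_eq_lintegral_of_nonneg_ae
      (ae_of_all _ fun y => (cauchyPDF_pos x₀ hγ y).le) hint.aestronglyMeasurable,
    integral_Iic_of_hasDerivAt_of_tendsto' (fun y _ => hderiv y) hint hbot]
  field_simp
  ring

lemma cauchyMeasure_map_neg (x₀ : ℝ) (γ : NNReal) :
    (cauchyMeasure x₀ γ).map (fun x => -x) = cauchyMeasure (-x₀) γ := by
  rcases eq_or_ne γ 0 with rfl | hγ
  · simp [Measure.map_dirac' measurable_neg]
  have cauchyPDF_neg (x : ℝ) : cauchyPDF x₀ γ (-x) = cauchyPDF (-x₀) γ x := by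
    rw [cauchyPDF, cauchyPDF, cauchyPDFReal_def, cauchyPDFReal_def]
    ring_nf
  ext S hS
  rw [cauchyMeasure_of_scale_ne_zero _ hγ, cauchyMeasure_of_scale_ne_zero _ hγ,
    Measure.map_apply measurable_neg hS, withDensity_apply _ (measurable_neg hS),
    withDensity_apply _ hS, ← (Measure.measurePreserving_neg volume).setLIntegral_comp_preimage
      hS (measurable_cauchyPDF _ _)]
  simp [← cauchyPDF_neg]

lemma map_sinh_arsinh_add_cauchyMeasure (α β : ℝ) :
    (cauchyMeasure 0 1).map (fun x => sinh (arsinh (cosh β * x) + α))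
        + (cauchyMeasure 0 1).map (fun x => sinh (arsinh (cosh β * x) - α))
      = (cauchyMeasure 0 1).map (fun x => cosh (β + α) * x)
        + (cauchyMeasure 0 1).map (fun x => cosh (β - α) * x) := by
  have sinh_add_le_iff (δ τ x : ℝ) : sinh (arsinh (cosh β * x) + δ) ≤ sinh τ ↔
      x ≤ sinh (τ - δ) / cosh β := by
    rw [sinh_arsinh_add_le_iff, arsinh_sinh, le_div_iff₀' (cosh_pos β)]
  have sinh_sub_le_iff (τ x : ℝ) : sinh (arsinh (cosh β * x) - α) ≤ sinh τ ↔
      x ≤ sinh (τ + α) / cosh β := by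
    simpa only [sub_neg_eq_add, ← sub_eq_add_neg] using sinh_add_le_iff (-α) τ x
  have cosh_mul_le_iff (δ τ x : ℝ) : cosh δ * x ≤ sinh τ ↔ x ≤ sinh τ / cosh δ :=
    (le_div_iff₀' (cosh_pos δ)).symm
  refine Measure.ext_of_Iic _ _ fun t => (measureReal_eq_measureReal_iff).mp ?_
  obtain ⟨τ, rfl⟩ := sinh_surjective t
  rw [measureReal_add_apply, measureReal_add_apply,
    map_real_Iic_eq_of_le_iff (by fun_prop) (sinh_add_le_iff α τ),
    map_real_Iic_eq_of_le_iff (by fun_prop) (sinh_sub_le_iff τ),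
    map_real_Iic_eq_of_le_iff (by fun_prop) (cosh_mul_le_iff (β + α) τ),
    map_real_Iic_eq_of_le_iff (by fun_prop) (cosh_mul_le_iff (β - α) τ)]
  simp only [cauchyMeasure_real_Iic 0 one_ne_zero, sub_zero, NNReal.coe_one, div_one]
  linear_combination π⁻¹ * arctan_sinh_sub_div_cosh_add_arctan_sinh_add_div_cosh α β τ

lemma hasLaw_sign_mul_cauchyMeasure {γ : NNReal} (hC : HasLaw C (cauchyMeasure 0 γ) P) {σ : ℝ}
    (hσ : σ = 1 ∨ σ = -1) : HasLaw (fun ω => σ * C ω) (cauchyMeasure 0 γ) P := by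
  rcases hσ with rfl | rfl
  · simpa only [one_mul] using hC
  · simp only [neg_one_mul]
    exact HasLaw.fun_comp (Y := fun x => -x)
      ⟨measurable_neg.aemeasurable, by rw [cauchyMeasure_map_neg, neg_zero]⟩ hC

end Cauchy

section CauchyRademacher

/-- The law of a fair random sign: the values `1` and `-1` have probability `1 / 2` each. -/
noncomputable def rademacherMeasure : Measure ℝ :=
  ((1 : ℝ≥0∞) / 2) • Measure.dirac 1 + ((1 : ℝ≥0∞) / 2) • Measure.dirac (-1)

variable {Ω : Type*} [MeasurableSpace Ω] {P : Measure Ω} {C ε : Ω → ℝ}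

lemma ae_eq_one_or_eq_neg_one_of_hasLaw_rademacherMeasure (hε : HasLaw ε rademacherMeasure P) :
    ∀ᵐ ω ∂P, ε ω = 1 ∨ ε ω = -1 := by
  refine ae_of_ae_map (p := fun x => x = 1 ∨ x = -1) hε.aemeasurable ?_
  rw [hε.map_eq, rademacherMeasure]
  simp [ae_add_measure_iff, ae_dirac_eq]

lemma identDistrib_sinh_arsinh_add_cosh_mul (hC : HasLaw C (cauchyMeasure 0 1) P)
    (hε : HasLaw ε rademacherMeasure P) (hindep : IndepFun C ε P) (α β : ℝ) :
    IdentDistrib (fun ω => sinh (arsinh (cosh β * C ω) + α * ε ω))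
      (fun ω => cosh (β + α * ε ω) * C ω) P P := by
  have hsinh := hasLaw_of_indepFun_of_hasLaw_add_dirac hC hε hindep
    (f := fun x e => sinh (arsinh (cosh β * x) + α * e)) (by fun_prop)
  have hcosh := hasLaw_of_indepFun_of_hasLaw_add_dirac hC hε hindep
    (f := fun x e => cosh (β + α * e) * x) (by fun_prop)
  simp only [mul_one, mul_neg_one, ← sub_eq_add_neg, ← smul_add,
    map_sinh_arsinh_add_cauchyMeasure] at hsinh hcosh
  exact hsinh.identDistrib hcosh

lemma map_add_tanh_mul_sqrt_eq_map_mul (hC : HasLaw C (cauchyMeasure 0 1) P)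
    (hε : HasLaw ε rademacherMeasure P) (hindep : IndepFun C ε P) {a : ℝ} (ha : 1 ≤ |a|) (α : ℝ) :
    P.map (fun ω => a * C ω + tanh α * √(1 + a ^ 2 * C ω ^ 2) * ε ω)
      = P.map (fun ω => (a + tanh α * √(a ^ 2 - 1) * ε ω) * C ω) := by
  obtain ⟨σ, β, hσ, rfl, hsqrt⟩ := exists_eq_sign_mul_cosh_and_sqrt_eq_sign_mul_sinh ha
  have hsign := ae_eq_one_or_eq_neg_one_of_hasLaw_rademacherMeasure hε
  have hident := identDistrib_sinh_arsinh_add_cosh_mul (hasLaw_sign_mul_cauchyMeasure hC hσ) hε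
    (hindep.comp (measurable_const_mul σ) measurable_id) α β
  calc P.map (fun ω => σ * cosh β * C ω + tanh α * √(1 + (σ * cosh β) ^ 2 * C ω ^ 2) * ε ω)
    _ = P.map (fun ω => (cosh α)⁻¹ * sinh (arsinh (cosh β * (σ * C ω)) + α * ε ω)) := by
      refine Measure.map_congr ?_
      filter_upwards [hsign] with ω hω
      rw [← add_tanh_mul_sqrt_mul_eq α _ hω]
      ring_nf
    _ = P.map (fun ω => (cosh α)⁻¹ * (cosh (β + α * ε ω) * (σ * C ω))) :=
      (hident.comp (measurable_const_mul (cosh α)⁻¹)).map_eq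
    _ = P.map (fun ω => (σ * cosh β + tanh α * √((σ * cosh β) ^ 2 - 1) * ε ω) * C ω) := by
      refine Measure.map_congr ?_
      filter_upwards [hsign] with ω hω
      rw [hsqrt]
      linear_combination -(σ * C ω) * cosh_add_tanh_mul_sinh_mul_eq α β hω

end CauchyRademacher

theorem stmt_10 {Ω : Type*} [MeasurableSpace Ω] (P : Measure Ω) [IsProbabilityMeasure P]
    (C ε : Ω → ℝ) (hC : Measurable C) (hε : Measurable ε)
    (hCauchy : P.map C = volume.withDensity (fun x => ENNReal.ofReal (1 / (π * (1 + x ^ 2)))))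
    (hRad : P.map ε = ((1:ℝ≥0∞)/2) • Measure.dirac (1:ℝ) + ((1:ℝ≥0∞)/2) • Measure.dirac (-1:ℝ))
    (hindep : IndepFun C ε P)
    (a θ : ℝ) (ha : 1 ≤ |a|) (hθ : θ ∈ Icc (-1:ℝ) 1) :
    P.map (fun ω => a * C ω + θ * Real.sqrt (1 + a ^ 2 * C ω ^ 2) * ε ω)
      = P.map (fun ω => (a + θ * Real.sqrt (a ^ 2 - 1) * ε ω) * C ω) := by
  have hC_law : HasLaw C (cauchyMeasure 0 1) P :=
    ⟨hC.aemeasurable, hCauchy.trans cauchyMeasure_zero_one.symm⟩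
  have hε_law : HasLaw ε rademacherMeasure P := ⟨hε.aemeasurable, hRad⟩
  have hclosed : IsClosed {t : ℝ | P.map (fun ω => a * C ω + t * √(1 + a ^ 2 * C ω ^ 2) * ε ω)
      = P.map (fun ω => (a + t * √(a ^ 2 - 1) * ε ω) * C ω)} :=
    isClosed_setOf_map_eq_map (by fun_prop) (by fun_prop) (by fun_prop) (by fun_prop)
  rw [← closure_Ioo (by norm_num)] at hθ
  refine hclosed.closure_subset_iff.mpr (fun t ht => ?_) hθ
  obtain ⟨α, -, rfl⟩ := tanh_surjOn ht
  exact map_add_tanh_mul_sqrt_eq_map_mul hC_law hε_law hindep ha α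
end
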